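/- Let 𝒮₀ be a nonempty decreasing subset of 𝒮 with 𝒮₀≠𝒮. Then E_{v₁}[exp(α·T_{𝒮₀})] < ∞ for every real α < α_c(δ), and E_{v₁}[exp(α·T_{𝒮₀})] = ∞ for every α ≥ α_c(δ). -/

import Mathlib

open scoped BigOperators Classical ENNReal
open Filter Topology

noncomputable section
namespace ORRW

/-- Probability measures on a finite type `A`, topologized as a subset of `ℝ^A`. -/
abbrev ProbMeas (A : Type) [Fintype A] : Type :=
  {p : A → ℝ // (∀ a, 0 ≤ p a) ∧ ∑ a, p a = 1}

/-- Relative entropy `R(γ‖ρ)` between two finitely supported "rows", valued in `EReal`,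
with `+∞` when absolute continuity fails. -/
def relEnt {A : Type} [Fintype A] (γ ρ : A → ℝ) : EReal :=
  if ∀ a, ρ a = 0 → γ a = 0 then ((∑ a, γ a * Real.log (γ a / ρ a) : ℝ) : EReal)
  else (⊤ : EReal)

/-- `∫ R(q‖p) dν = Σ_a ν(a) · R(q(a,·)‖p(a,·))`. -/
def relEntInt {A : Type} [Fintype A] (ν : A → ℝ) (q p : A → A → ℝ) : EReal :=
  ∑ a, (ν a : EReal) * relEnt (q a) (p a)

/-- `ν` is an invariant measure of the kernel `q`. -/
def Invariant {A : Type} [Fintype A] (ν : A → ℝ) (q : A → A → ℝ) : Prop :=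
  ∀ y, ∑ x, ν x * q x y = ν y

/-- Extended-real logarithm: `⊥` at nonpositive arguments. -/
def elog (x : ℝ) : EReal := if x ≤ 0 then (⊥ : EReal) else ((Real.log x : ℝ) : EReal)

/-- Empirical measure of a finite trajectory `f : Fin (n+1) → A`. -/
def empMeas {A : Type} [Fintype A] [DecidableEq A] (n : ℕ) (f : Fin (n + 1) → A) :
    ProbMeas A :=
  ⟨fun a => ((Finset.univ.filter (fun i => f i = a)).card : ℝ) / (n + 1),
    fun a => by positivity, by
      have key : ∑ a : A, ((Finset.univ.filter (fun i => f i = a)).card) = n + 1 := by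
        have h := Finset.card_eq_sum_card_fiberwise
          (s := (Finset.univ : Finset (Fin (n + 1)))) (t := (Finset.univ : Finset A))
          (f := f) (fun i _ => Finset.mem_univ (f i))
        simpa using h.symm
      have key' : ∑ a : A, (((Finset.univ.filter (fun i => f i = a)).card : ℝ)) = (n : ℝ) + 1 := by
        have h2 := congrArg (fun m : ℕ => (m : ℝ)) key
        push_cast at h2
        simpa using h2
      rw [← Finset.sum_div, key', div_self (by positivity)]⟩

section Graph

variable {V : Type} [Fintype V] [DecidableEq V]

/-- Weight of an edge given the set `F` of already traversed edges. -/
def gw (δ : ℝ) (F : Finset (Sym2 V)) (e : Sym2 V) : ℝ := if e ∈ F then δ else 1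

/-- The transition kernel `p̂_F` on `V`. -/
def phat (G : SimpleGraph V) [DecidableRel G.Adj] (δ : ℝ) (F : Finset (Sym2 V))
    (x y : V) : ℝ :=
  if G.Adj x y then gw δ F s(x, y) / ∑ z ∈ G.neighborFinset x, gw δ F s(x, z) else 0

/-- Two edges are adjacent iff they share a vertex. -/
def edgeAdj (e e' : Sym2 V) : Prop := ∃ v, v ∈ e ∧ v ∈ e'

/-- `x` is a vertex of the edge set `F`. -/
def memVerts (F : Finset (Sym2 V)) (x : V) : Prop := ∃ e ∈ F, x ∈ e

/-- `𝒯_G`: stochastic matrices on `V` adapted to `G`. -/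
def TG (G : SimpleGraph V) : Set (V → V → ℝ) :=
  {q | (∀ x y, 0 ≤ q x y) ∧ (∀ x, ∑ y, q x y = 1) ∧ ∀ x y, q x y ≠ 0 → G.Adj x y}

/-- `𝒯(F)`: stochastic kernels from the vertex set of `F` to `V`, supported on `F`. -/
def TE (F : Finset (Sym2 V)) : Set (V → V → ℝ) :=
  {q | (∀ x y, 0 ≤ q x y) ∧ (∀ x, memVerts F x → ∑ y, q x y = 1) ∧
    ∀ x y, q x y ≠ 0 → s(x, y) ∈ F}

/-- `ℰ`: admissible increasing sequences of traversed edge sets. -/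
def seqE (G : SimpleGraph V) [DecidableRel G.Adj] (v₁ : V) :
    Set (Fin G.edgeFinset.card → Finset (Sym2 V)) :=
  {Es | (∀ k, Es k ⊆ G.edgeFinset) ∧ (∀ k, (Es k).card = (k : ℕ) + 1) ∧
    (∀ k l : Fin G.edgeFinset.card, (k : ℕ) + 1 = (l : ℕ) → Es k ⊂ Es l) ∧
    (∀ k : Fin G.edgeFinset.card, (k : ℕ) = 0 → ∃ e ∈ Es k, v₁ ∈ e) ∧
    (∀ k l : Fin G.edgeFinset.card, (k : ℕ) + 1 = (l : ℕ) →
      ∀ e ∈ Es l \ Es k, ∃ e' ∈ Es k, edgeAdj e e')}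

/-- The rate function `I_δ`. -/
def Ifun (G : SimpleGraph V) [DecidableRel G.Adj] (v₁ : V) (δ : ℝ) (ν : ProbMeas V) : EReal :=
  sInf { c : EReal |
    ∃ (νs : Fin G.edgeFinset.card → ProbMeas V) (r : Fin G.edgeFinset.card → ℝ)
      (Es : Fin G.edgeFinset.card → Finset (Sym2 V))
      (qs : Fin G.edgeFinset.card → V → V → ℝ),
      Es ∈ seqE G v₁ ∧ (∀ k, 0 ≤ r k) ∧ (∑ k, r k = 1) ∧
      (∀ k x, (νs k).1 x ≠ 0 → memVerts (Es k) x) ∧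
      (∀ x, ∑ k, r k * (νs k).1 x = ν.1 x) ∧
      (∀ k, qs k ∈ TE (Es k)) ∧ (∀ k, Invariant (νs k).1 (qs k)) ∧
      c = ∑ k, ((r k : ℝ) : EReal) * relEntInt (νs k).1 (qs k) (phat G δ (Es k)) }

/-- Edges traversed along a path, given as a list of consecutively visited vertices. -/
def pathEdges : List V → Finset (Sym2 V)
  | [] => ∅
  | [_] => ∅
  | x :: y :: t => insert s(x, y) (pathEdges (y :: t))

/-- Product of one-step ORRW transition probabilities along a trajectory,
the trajectory being listed in reverse chronological order. -/
def stepsProb (G : SimpleGraph V) [DecidableRel G.Adj] (δ : ℝ) : List V → ℝ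
  | [] => 1
  | [_] => 1
  | y :: x :: t => phat G δ (pathEdges (x :: t).reverse) x y * stepsProb G δ (x :: t)

/-- The law of `(X_0, …, X_n)` for the `δ`-ORRW started at `v₁`. -/
def trajProb (G : SimpleGraph V) [DecidableRel G.Adj] (δ : ℝ) (v₁ : V) (n : ℕ)
    (f : Fin (n + 1) → V) : ℝ :=
  if f 0 = v₁ then stepsProb G δ (List.ofFn f).reverse else 0

/-- `P_{v₁}(L_{n+1} ∈ C)`: the probability that the empirical measure of the first
`n+1` positions of the `δ`-ORRW lies in `C`. -/
def probEmp (G : SimpleGraph V) [DecidableRel G.Adj] (δ : ℝ) (v₁ : V) (n : ℕ)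
    (C : Set (ProbMeas V)) : ℝ :=
  ∑ f : Fin (n + 1) → V, if empMeas n f ∈ C then trajProb G δ v₁ n f else 0

/-- The family `𝒮` of edge sets of connected subgraphs having an edge at `v₁`. -/
def scrS (G : SimpleGraph V) [DecidableRel G.Adj] (v₁ : V) : Set (Finset (Sym2 V)) :=
  {F | F ⊆ G.edgeFinset ∧ (∃ e ∈ F, v₁ ∈ e) ∧
    ∀ x y : V, memVerts F x → memVerts F y →
      (SimpleGraph.fromEdgeSet (↑F : Set (Sym2 V))).Reachable x y}

/-- `𝒮₀` is a decreasing subset of `𝒮`. -/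
def DecreasingIn (G : SimpleGraph V) [DecidableRel G.Adj] (v₁ : V)
    (S0 : Set (Finset (Sym2 V))) : Prop :=
  ∀ F₁ F₂, F₁ ∈ scrS G v₁ → F₂ ∈ scrS G v₁ → F₁ ⊆ F₂ → F₂ ∈ S0 → F₁ ∈ S0

/-- `P_{v₁}(T_{𝒮₀} > n)`. -/
def probTgt (G : SimpleGraph V) [DecidableRel G.Adj] (δ : ℝ) (v₁ : V)
    (S0 : Set (Finset (Sym2 V))) (n : ℕ) : ℝ :=
  ∑ f : Fin (n + 1) → V,
    if ∀ k, 1 ≤ k → k ≤ n → pathEdges ((List.ofFn f).take (k + 1)) ∈ S0 then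
      trajProb G δ v₁ n f
    else 0

/-- `P_{v₁}(C_E > n)` for the edge cover time `C_E`. -/
def probCgt (G : SimpleGraph V) [DecidableRel G.Adj] (δ : ℝ) (v₁ : V) (n : ℕ) : ℝ :=
  ∑ f : Fin (n + 1) → V,
    if ¬ G.edgeFinset ⊆ pathEdges (List.ofFn f) then trajProb G δ v₁ n f else 0

/-- `E_{v₁}[exp (α T_{𝒮₀})]`, valued in `ℝ≥0∞`; the stopping time takes values in
`{1, 2, …} ∪ {∞}`. -/
def expT (G : SimpleGraph V) [DecidableRel G.Adj] (δ : ℝ) (v₁ : V)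
    (S0 : Set (Finset (Sym2 V))) (α : ℝ) : ℝ≥0∞ :=
  (∑' n : ℕ, ENNReal.ofReal
      (Real.exp (α * (n + 1)) * (probTgt G δ v₁ S0 n - probTgt G δ v₁ S0 (n + 1)))) +
    (if 0 < α then (⊤ : ℝ≥0∞) else if α = 0 then 1 else 0) *
      ENNReal.ofReal (⨅ n : ℕ, probTgt G δ v₁ S0 n)

/-- `E_{v₁}[exp (α C_E)]`, valued in `ℝ≥0∞`. -/
def expC (G : SimpleGraph V) [DecidableRel G.Adj] (δ : ℝ) (v₁ : V) (α : ℝ) : ℝ≥0∞ :=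
  (∑' n : ℕ, ENNReal.ofReal
      (Real.exp (α * (n + 1)) * (probCgt G δ v₁ n - probCgt G δ v₁ (n + 1)))) +
    (if 0 < α then (⊤ : ℝ≥0∞) else if α = 0 then 1 else 0) *
      ENNReal.ofReal (⨅ n : ℕ, probCgt G δ v₁ n)

/-- The critical exponent `α_c(δ)` attached to a family `𝒮₀` of edge sets. -/
def alphaC (G : SimpleGraph V) [DecidableRel G.Adj] (δ : ℝ)
    (S0 : Set (Finset (Sym2 V))) : EReal :=
  sInf { c : EReal | ∃ (ν : ProbMeas V) (F : Finset (Sym2 V)) (q : V → V → ℝ),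
    F ∈ S0 ∧ q ∈ TE F ∧ (∀ x, ν.1 x ≠ 0 → memVerts F x) ∧ Invariant ν.1 q ∧
    c = relEntInt ν.1 q (phat G δ F) }

/-- `α_c^1(δ)`: the critical exponent for the cover time. -/
def alphaC1 (G : SimpleGraph V) [DecidableRel G.Adj] (v₁ : V) (δ : ℝ) : EReal :=
  alphaC G δ (scrS G v₁ \ {G.edgeFinset})

end Graph

section Lifted

variable {V : Type} [Fintype V] [LinearOrder V]

/-- Smaller endpoint of an unordered pair. -/
def sym2lo (e : Sym2 V) : V := Sym2.lift ⟨fun a b => min a b, fun a b => min_comm a b⟩ e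

/-- Larger endpoint of an unordered pair. -/
def sym2hi (e : Sym2 V) : V := Sym2.lift ⟨fun a b => max a b, fun a b => max_comm a b⟩ e

/-- `V_S = E × {-1, 1}`: vertex set of the lifted directed graph `S`
(`true` plays the role of `+1`). -/
abbrev VSet (G : SimpleGraph V) [DecidableRel G.Adj] : Type :=
  {e : Sym2 V // e ∈ G.edgeFinset} × Bool

/-- Tail `z⁻` of an oriented edge. -/
def zm (G : SimpleGraph V) [DecidableRel G.Adj] (z : VSet G) : V :=
  if z.2 then sym2lo z.1.1 else sym2hi z.1.1

/-- Head `z⁺` of an oriented edge. -/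
def zp (G : SimpleGraph V) [DecidableRel G.Adj] (z : VSet G) : V :=
  if z.2 then sym2hi z.1.1 else sym2lo z.1.1

/-- The kernel `p_F` on the lifted directed graph `S`. -/
def pS (G : SimpleGraph V) [DecidableRel G.Adj] (δ : ℝ) (F : Finset (Sym2 V))
    (z₁ z₂ : VSet G) : ℝ :=
  if zp G z₁ = zm G z₂ then
    gw δ F z₂.1.1 / ∑ w : VSet G, (if zp G z₁ = zm G w then gw δ F w.1.1 else 0)
  else 0

/-- `𝒯_S`: stochastic matrices on `V_S` moving along orientations. -/
def TS (G : SimpleGraph V) [DecidableRel G.Adj] : Set (VSet G → VSet G → ℝ) :=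
  {q | (∀ z w, 0 ≤ q z w) ∧ (∀ z, ∑ w, q z w = 1) ∧ ∀ z w, q z w ≠ 0 → zp G z = zm G w}

/-- `𝒞(𝒮₀)`: probability measures on `V_S` whose first marginal is supported in
some member of `𝒮₀`. -/
def CC (G : SimpleGraph V) [DecidableRel G.Adj] (S0 : Set (Finset (Sym2 V))) :
    Set (ProbMeas (VSet G)) :=
  {μ | ∃ F ∈ S0, ∀ z : VSet G, μ.1 z ≠ 0 → z.1.1 ∈ F}

/-- `Λ_{δ,𝒮₀}`. -/
def Lam (G : SimpleGraph V) [DecidableRel G.Adj] (v₁ : V) (δ : ℝ)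
    (S0 : Set (Finset (Sym2 V))) (μ : ProbMeas (VSet G)) : EReal :=
  sInf { c : EReal |
    ∃ (μs : Fin G.edgeFinset.card → ProbMeas (VSet G)) (r : Fin G.edgeFinset.card → ℝ)
      (Es : Fin G.edgeFinset.card → Finset (Sym2 V))
      (qs : Fin G.edgeFinset.card → VSet G → VSet G → ℝ),
      Es ∈ seqE G v₁ ∧ (∀ k, 0 ≤ r k) ∧ (∀ k, Es k ∉ S0 → r k = 0) ∧ (∑ k, r k = 1) ∧
      (∀ k z, (μs k).1 z ≠ 0 → z.1.1 ∈ Es k) ∧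
      (∀ z, ∑ k, r k * (μs k).1 z = μ.1 z) ∧
      (∀ k, qs k ∈ TS G) ∧ (∀ k, Invariant (μs k).1 (qs k)) ∧
      c = ∑ k, ((r k : ℝ) : EReal) * relEntInt (μs k).1 (qs k) (pS G δ (Es k)) }

/-- `Λ^z_{δ,𝒮₀}`. -/
def LamZ (G : SimpleGraph V) [DecidableRel G.Adj] (v₁ : V) (δ : ℝ)
    (S0 : Set (Finset (Sym2 V))) (z : VSet G) (μ : ProbMeas (VSet G)) : EReal :=
  sInf { c : EReal |
    ∃ (μs : Fin G.edgeFinset.card → ProbMeas (VSet G)) (r : Fin G.edgeFinset.card → ℝ)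
      (Es : Fin G.edgeFinset.card → Finset (Sym2 V))
      (qs : Fin G.edgeFinset.card → VSet G → VSet G → ℝ),
      Es ∈ seqE G v₁ ∧ (∀ k : Fin G.edgeFinset.card, (k : ℕ) = 0 → Es k = {z.1.1}) ∧
      (∀ k, 0 ≤ r k) ∧ (∀ k, Es k ∉ S0 → r k = 0) ∧ (∑ k, r k = 1) ∧
      (∀ k w, (μs k).1 w ≠ 0 → w.1.1 ∈ Es k) ∧
      (∀ w, ∑ k, r k * (μs k).1 w = μ.1 w) ∧
      (∀ k, qs k ∈ TS G) ∧ (∀ k, Invariant (μs k).1 (qs k)) ∧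
      c = ∑ k, ((r k : ℝ) : EReal) * relEntInt (μs k).1 (qs k) (pS G δ (Es k)) }

/-- `Λ₁`: the Donsker–Varadhan functional for the simple random walk on `S`
(whose kernel is `pS` with `δ = 1`). -/
def Lam1 (G : SimpleGraph V) [DecidableRel G.Adj] (μ : ProbMeas (VSet G)) : EReal :=
  sInf { c : EReal | ∃ q ∈ TS G, Invariant μ.1 q ∧ c = relEntInt μ.1 q (pS G 1 ∅) }

/-- Boundary `∂F` of an edge set: edges of `F` adjacent to some edge outside `F`. -/
def bdry (G : SimpleGraph V) [DecidableRel G.Adj] (F : Finset (Sym2 V)) : Finset (Sym2 V) :=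
  F.filter fun e => ∃ e' ∈ G.edgeFinset \ F, edgeAdj e e'

/-- Out-degree `d(z)` of `z` in `S`. -/
def outDeg (G : SimpleGraph V) [DecidableRel G.Adj] (z : VSet G) : ℕ :=
  (Finset.univ.filter (fun w : VSet G => zp G z = zm G w)).card

/-- Number `k(z)` of out-neighbours of `z` lying in `F × {-1, 1}`. -/
def outDegIn (G : SimpleGraph V) [DecidableRel G.Adj] (F : Finset (Sym2 V))
    (z : VSet G) : ℕ :=
  (Finset.univ.filter (fun w : VSet G => zp G z = zm G w ∧ w.1.1 ∈ F)).card

/-- The law of `(Z_0, …, Z_n)` for the lifted `δ`-ORRW conditioned on `Z_0 = z`. -/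
def liftTraj (G : SimpleGraph V) [DecidableRel G.Adj] (δ : ℝ) (z : VSet G) (n : ℕ)
    (g : Fin (n + 1) → VSet G) : ℝ :=
  if g 0 = z then
    ∏ i : Fin n,
      pS G δ ((Finset.Iic i.castSucc).image (fun j => (g j).1.1))
        (g i.castSucc) (g i.succ)
  else 0

/-- The restricted logarithmic Laplace functional `W^{n+1}_{𝒮₀}(z)`. -/
def Wres (G : SimpleGraph V) [DecidableRel G.Adj] (δ : ℝ) (z : VSet G)
    (S0 : Set (Finset (Sym2 V))) (h : ProbMeas (VSet G) → ℝ) (n : ℕ) : EReal :=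
  if 0 < ∑ g : Fin (n + 1) → VSet G,
      (if empMeas n g ∈ CC G S0 then liftTraj G δ z n g else 0) then
    ((-((((n : ℝ) + 1))⁻¹ * Real.log (∑ g : Fin (n + 1) → VSet G,
      if empMeas n g ∈ CC G S0 then
        Real.exp (-((n : ℝ) + 1) * h (empMeas n g)) * liftTraj G δ z n g
      else 0)) : ℝ) : EReal)
  else (⊤ : EReal)

end Lifted

section Mine

lemma quad_zero {b c : ℝ} (h : ∀ t : ℝ, 0 ≤ t * b + t ^ 2 * c) : b = 0 := by
  by_contra hb
  have hc : 0 ≤ c ^ 2 := sq_nonneg c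
  have h1 := h (-b / (1 + c ^ 2))
  have h2 : (-b / (1 + c ^ 2)) * b + (-b / (1 + c ^ 2)) ^ 2 * c
      = - (b ^ 2 * (1 + c ^ 2 - c)) / (1 + c ^ 2) ^ 2 := by
    field_simp
    ring
  rw [h2] at h1
  have hb2 : 0 < b ^ 2 := by positivity
  have h3 : 0 < 1 + c ^ 2 - c := by nlinarith [sq_nonneg (c - 1)]
  have : - (b ^ 2 * (1 + c ^ 2 - c)) / (1 + c ^ 2) ^ 2 < 0 := by
    apply div_neg_of_neg_of_pos
    · nlinarith [mul_pos hb2 h3]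
    · positivity
  linarith

lemma perron_aux {V : Type} [Fintype V] [Nonempty V] (w : V → V → ℝ) (W : V → ℝ)
    (hs : ∀ x y, w x y = w y x) (hn : ∀ x y, 0 ≤ w x y) (hW : ∀ x, 0 < W x) :
    ∃ (l : ℝ) (f : V → ℝ), (∀ x, 0 ≤ f x) ∧ (∃ x, f x ≠ 0) ∧
      (∀ x, ∑ y, w x y * f y = l * (W x * f x)) ∧
      ∀ g : V → ℝ, ∑ x, ∑ y, w x y * (g x * g y) ≤ l * ∑ x, W x * g x ^ 2 := by
  classical
  let Q : (V → ℝ) → ℝ := fun g => ∑ x, ∑ y, w x y * (g x * g y)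
  let N : (V → ℝ) → ℝ := fun g => ∑ x, W x * g x ^ 2
  have hQc : Continuous Q := by fun_prop
  have hNc : Continuous N := by fun_prop
  have hNnn : ∀ g, 0 ≤ N g := fun g =>
    Finset.sum_nonneg fun x _ => mul_nonneg (hW x).le (sq_nonneg _)
  have hNpos : ∀ g, (∃ x, g x ≠ 0) → 0 < N g := by
    rintro g ⟨x, hx⟩
    refine Finset.sum_pos' (fun x _ => mul_nonneg (hW x).le (sq_nonneg _)) ⟨x, Finset.mem_univ _, ?_⟩
    have := hW x
    positivity
  let K : Set (V → ℝ) := {g | N g = 1}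
  have hK : IsCompact K := by
    have hcl : IsClosed K := isClosed_eq hNc continuous_const
    refine (isCompact_univ_pi (fun x => isCompact_Icc (a := -(1 + 1 / W x)) (b := 1 + 1 / W x))).of_isClosed_subset hcl ?_
    intro g hg x _
    have h1 : W x * g x ^ 2 ≤ 1 := by
      rw [← show N g = 1 from hg]
      exact Finset.single_le_sum (f := fun x => W x * g x ^ 2)
        (fun x _ => mul_nonneg (hW x).le (sq_nonneg _)) (Finset.mem_univ x)
    have h2 : g x ^ 2 ≤ 1 / W x := by
      rw [le_div_iff₀ (hW x)]; linarith
    have h3 : 0 < 1 / W x := one_div_pos.mpr (hW x)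
    constructor <;> nlinarith
  have hscale : ∀ (g : V → ℝ) (t : ℝ), N (fun x => t * g x) = t ^ 2 * N g := by
    intro g t
    simp only [N, Finset.mul_sum]
    exact Finset.sum_congr rfl fun x _ => by ring
  have hscaleQ : ∀ (g : V → ℝ) (t : ℝ), Q (fun x => t * g x) = t ^ 2 * Q g := by
    intro g t
    simp only [Q, Finset.mul_sum]
    exact Finset.sum_congr rfl fun x _ => Finset.sum_congr rfl fun y _ => by ring
  have hnorm : ∀ g, 0 < N g → (fun x => (Real.sqrt (N g))⁻¹ * g x) ∈ K := by
    intro g hg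
    show N _ = 1
    rw [hscale, inv_pow, Real.sq_sqrt hg.le, inv_mul_cancel₀ hg.ne']
  have hKne : K.Nonempty := ⟨_, hnorm (fun _ => 1) (hNpos _ ⟨Classical.arbitrary V, one_ne_zero⟩)⟩
  obtain ⟨f₀, hf₀, hmax⟩ := hK.exists_isMaxOn hKne hQc.continuousOn
  have hbound : ∀ g, Q g ≤ Q f₀ * N g := by
    intro g
    by_cases hg : ∃ x, g x ≠ 0
    · have hg' := hNpos g hg
      have h1 : Q (fun x => (Real.sqrt (N g))⁻¹ * g x) ≤ Q f₀ := hmax (hnorm g hg')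
      rw [hscaleQ, inv_pow, Real.sq_sqrt hg'.le] at h1
      rw [inv_mul_le_iff₀ hg'] at h1
      linarith
    · push Not at hg
      simp [Q, N, hg]
  let f : V → ℝ := fun x => |f₀ x|
  have hNf : N f = 1 := by
    rw [← show N f₀ = 1 from hf₀]
    simp [N, f]
  have hQf : Q f = Q f₀ := by
    apply le_antisymm
    · have := hbound f
      rwa [hNf, mul_one] at this
    · refine Finset.sum_le_sum fun x _ => Finset.sum_le_sum fun y _ => ?_
      apply mul_le_mul_of_nonneg_left _ (hn x y)
      simp only [f, ← abs_mul]
      exact le_abs_self _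
  refine ⟨Q f₀, f, fun x => abs_nonneg _, ?_, ?_, hbound⟩
  · by_contra hcon
    push Not at hcon
    have : N f = 0 := by simp [N, hcon]
    linarith
  · intro x
    set l := Q f₀ with hl
    have key : ∀ t : ℝ, 0 ≤ t * (2 * (l * (W x * f x) - ∑ y, w x y * f y)) + t ^ 2 * (l * W x - w x x) := by
      intro t
      have h1 := hbound (fun z => f z + t * (if z = x then 1 else 0))
      have hN1 : N (fun z => f z + t * (if z = x then 1 else 0)) = N f + 2 * t * (W x * f x) + t ^ 2 * W x := by
        simp only [N]
        have : ∀ z, W z * (f z + t * (if z = x then 1 else 0)) ^ 2 = W z * f z ^ 2 + (if z = x then 2 * t * (W z * f z) + t ^ 2 * W z else 0) := by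
          intro z; split_ifs <;> ring
        simp only [this, Finset.sum_add_distrib, Finset.sum_ite_eq', Finset.mem_univ, if_true]
        ring
      have hQ1 : Q (fun z => f z + t * (if z = x then 1 else 0)) = l + 2 * t * (∑ y, w x y * f y) + t ^ 2 * w x x := by
        rw [← hQf]
        simp only [Q]
        have : ∀ a b, w a b * ((f a + t * (if a = x then 1 else 0)) * (f b + t * (if b = x then 1 else 0)))
            = w a b * (f a * f b) + (if a = x then t * (w a b * f b) else 0) + (if b = x then t * (w a b * f a) else 0)
              + (if b = x then (if a = x then t ^ 2 * w a b else 0) else 0) := by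
          intro a b; split_ifs <;> ring
        simp only [this, Finset.sum_add_distrib, Finset.sum_ite_eq', Finset.mem_univ, if_true]
        have h3 : ∑ a, ∑ b, (if a = x then t * (w a b * f b) else 0) = t * ∑ y, w x y * f y := by
          rw [Finset.sum_comm]
          simp [Finset.mul_sum]
        have h4 : ∑ a, t * (w a x * f a) = t * ∑ y, w x y * f y := by
          rw [Finset.mul_sum]
          exact Finset.sum_congr rfl fun y _ => by rw [hs y x]
        rw [h3, h4]
        ring
      rw [hN1, hQ1, hNf] at h1
      linarith
    have := quad_zero key
    linarith


end Mine

section Mine2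
set_option linter.unusedSectionVars false
variable {V : Type} [Fintype V] [DecidableEq V] {G : SimpleGraph V} [DecidableRel G.Adj]

/-- total weight at a vertex -/
def Wt (G : SimpleGraph V) [DecidableRel G.Adj] (δ : ℝ) (F : Finset (Sym2 V)) (x : V) : ℝ :=
  ∑ z ∈ G.neighborFinset x, gw δ F s(x, z)

/-- restricted kernel -/
def MF (G : SimpleGraph V) [DecidableRel G.Adj] (δ : ℝ) (F : Finset (Sym2 V)) (x y : V) : ℝ :=
  if s(x, y) ∈ F then phat G δ F x y else 0

lemma gw_pos {δ : ℝ} (hδ : 0 < δ) (F : Finset (Sym2 V)) (e : Sym2 V) : 0 < gw δ F e := by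
  unfold gw; split_ifs <;> simp [hδ]

lemma nbr_nonempty (hG : G.Connected) (hV : 3 ≤ Fintype.card V) (x : V) :
    ∃ y, G.Adj x y := by
  have : Nontrivial V := Fintype.one_lt_card_iff_nontrivial.mp (by omega)
  exact hG.preconnected.exists_adj_of_nontrivial x

lemma Wt_pos (hG : G.Connected) (hV : 3 ≤ Fintype.card V) {δ : ℝ} (hδ : 0 < δ)
    (F : Finset (Sym2 V)) (x : V) : 0 < Wt G δ F x := by
  obtain ⟨y, hy⟩ := nbr_nonempty hG hV x
  exact Finset.sum_pos (fun z _ => gw_pos hδ F _) ⟨y, by simpa using hy⟩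

lemma phat_nonneg {δ : ℝ} (hδ : 0 < δ) (F : Finset (Sym2 V)) (x y : V) :
    0 ≤ phat G δ F x y := by
  unfold phat
  split_ifs
  · exact div_nonneg (gw_pos hδ F _).le (Finset.sum_nonneg fun z _ => (gw_pos hδ F _).le)
  · exact le_rfl

lemma phat_pos (hG : G.Connected) (hV : 3 ≤ Fintype.card V) {δ : ℝ} (hδ : 0 < δ)
    (F : Finset (Sym2 V)) {x y : V} (h : G.Adj x y) : 0 < phat G δ F x y := by
  unfold phat
  rw [if_pos h]
  exact div_pos (gw_pos hδ F _) (Wt_pos hG hV hδ F x)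

lemma phat_sum (hG : G.Connected) (hV : 3 ≤ Fintype.card V) {δ : ℝ} (hδ : 0 < δ)
    (F : Finset (Sym2 V)) (x : V) : ∑ y, phat G δ F x y = 1 := by
  unfold phat
  rw [← Finset.sum_filter, ← Finset.sum_div]
  have : Finset.univ.filter (fun a => G.Adj x a) = G.neighborFinset x := by
    ext y; simp
  rw [this]
  exact div_self (Wt_pos hG hV hδ F x).ne'

lemma adj_of_mem {F : Finset (Sym2 V)} (hF : F ⊆ G.edgeFinset) {x y : V} (h : s(x, y) ∈ F) :
    G.Adj x y := by
  have := hF h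
  simpa using this

lemma MF_nonneg {δ : ℝ} (hδ : 0 < δ) (F : Finset (Sym2 V)) (x y : V) :
    0 ≤ MF G δ F x y := by
  unfold MF; split_ifs
  · exact phat_nonneg hδ F x y
  · exact le_rfl

lemma MF_eq {δ : ℝ} {F : Finset (Sym2 V)} (hF : F ⊆ G.edgeFinset) (x y : V) :
    MF G δ F x y = (if s(x, y) ∈ F then δ else 0) / Wt G δ F x := by
  unfold MF phat Wt
  split_ifs with h h'
  · simp [gw, h]
  · exact absurd (adj_of_mem hF h) h'
  · simp

lemma MF_symm (hG : G.Connected) (hV : 3 ≤ Fintype.card V) {δ : ℝ} (hδ : 0 < δ)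
    {F : Finset (Sym2 V)} (hF : F ⊆ G.edgeFinset) (x y : V) :
    Wt G δ F x * MF G δ F x y = Wt G δ F y * MF G δ F y x := by
  rw [MF_eq hF, MF_eq hF, mul_div_cancel₀ _ (Wt_pos hG hV hδ F x).ne',
    mul_div_cancel₀ _ (Wt_pos hG hV hδ F y).ne', Sym2.eq_swap]

lemma memVerts_left {F : Finset (Sym2 V)} {x y : V} (h : s(x, y) ∈ F) : memVerts F x :=
  ⟨_, h, by simp⟩

lemma memVerts_right {F : Finset (Sym2 V)} {x y : V} (h : s(x, y) ∈ F) : memVerts F y :=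
  ⟨_, h, by simp⟩

/-- Perron data for the restricted kernel. -/
def IsPerron (G : SimpleGraph V) [DecidableRel G.Adj] (δ : ℝ) (F : Finset (Sym2 V))
    (l : ℝ) (r : V → ℝ) : Prop :=
  0 < l ∧ (∀ x, memVerts F x → 0 < r x) ∧ (∀ x, ¬ memVerts F x → r x = 0) ∧
    ∀ x, ∑ y, MF G δ F x y * r y = l * r x

lemma exists_perron (hG : G.Connected) (hV : 3 ≤ Fintype.card V) {δ : ℝ} (hδ : 0 < δ)
    {v₁ : V} {F : Finset (Sym2 V)} (hF : F ∈ scrS G v₁) : ∃ l r, IsPerron G δ F l r := by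
  obtain ⟨hFE, ⟨e, heF, -⟩, hconn⟩ := hF
  have : Nonempty V := ⟨v₁⟩
  let w : V → V → ℝ := fun x y => if s(x, y) ∈ F then δ else 0
  have hwnn : ∀ x y, 0 ≤ w x y := by
    intro x y; simp only [w]; split_ifs
    · exact hδ.le
    · exact le_rfl
  obtain ⟨l, f, hf0, ⟨z, hz⟩, hev, hmax⟩ := perron_aux w (Wt G δ F)
    (fun x y => by simp only [w]; rw [Sym2.eq_swap]) hwnn (Wt_pos hG hV hδ F)
  have hl : 0 < l := by
    have h1 := hmax (fun _ => 1)
    simp only [mul_one, one_pow] at h1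
    have h2 : 0 < ∑ x, ∑ y, w x y := by
      induction e using Sym2.ind with
      | _ a b =>
        refine Finset.sum_pos' (fun x _ => Finset.sum_nonneg fun y _ => hwnn x y)
          ⟨a, Finset.mem_univ _, ?_⟩
        refine Finset.sum_pos' (fun y _ => hwnn a y) ⟨b, Finset.mem_univ _, ?_⟩
        simp [w, heF, hδ]
    have h3 : 0 < ∑ x, Wt G δ F x :=
      Finset.sum_pos (fun x _ => Wt_pos hG hV hδ F x) Finset.univ_nonempty
    have h4 := h2.trans_le h1
    exact pos_of_mul_pos_left h4 h3.le
  have hoff : ∀ x, ¬ memVerts F x → f x = 0 := by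
    intro x hx
    have h1 := hev x
    have h2 : ∑ y, w x y * f y = 0 := by
      refine Finset.sum_eq_zero fun y _ => ?_
      have : s(x, y) ∉ F := fun h => hx (memVerts_left h)
      simp [w, this]
    rw [h2] at h1
    have hW := (Wt_pos hG hV hδ F x).ne'
    have := hl.ne'
    by_contra h
    exact (mul_ne_zero this (mul_ne_zero hW h)) h1.symm
  have hprop : ∀ x y, (SimpleGraph.fromEdgeSet (↑F : Set (Sym2 V))).Adj x y → f x = 0 → f y = 0 := by
    intro x y hxy hx
    have hmem : s(x, y) ∈ F := by
      rw [SimpleGraph.fromEdgeSet_adj] at hxy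
      exact_mod_cast hxy.1
    have h1 := hev x
    rw [hx, mul_zero, mul_zero] at h1
    rw [Finset.sum_eq_zero_iff_of_nonneg (fun y _ => mul_nonneg (hwnn x y) (hf0 y))] at h1
    have h2 := h1 y (Finset.mem_univ _)
    simp only [w, hmem, if_true] at h2
    rcases mul_eq_zero.mp h2 with h | h
    · exact absurd h hδ.ne'
    · exact h
  have hprop2 : ∀ x y, (SimpleGraph.fromEdgeSet (↑F : Set (Sym2 V))).Reachable x y → f x = 0 → f y = 0 := by
    rintro x y ⟨p⟩
    induction p with
    | nil => exact id
    | cons h p ih => exact fun hx => ih (hprop _ _ h hx)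
  refine ⟨l, f, hl, ?_, hoff, ?_⟩
  · intro x hx
    rcases (hf0 x).lt_or_eq with h | h
    · exact h
    · exfalso
      apply hz
      by_cases hzF : memVerts F z
      · exact hprop2 x z (hconn x z hx hzF) h.symm
      · exact hoff z hzF
  · intro x
    have hW := Wt_pos hG hV hδ F x
    have h1 := hev x
    simp only [MF_eq hFE]
    have : ∀ y, (if s(x, y) ∈ F then δ else 0) / Wt G δ F x * f y = (w x y * f y) / Wt G δ F x := by
      intro y; simp only [w]; ring
    simp only [this]
    rw [← Finset.sum_div, h1]
    field_simp

lemma perron_lt_one (hG : G.Connected) (hV : 3 ≤ Fintype.card V) {δ : ℝ} (hδ : 0 < δ)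
    {v₁ : V} {F : Finset (Sym2 V)} (hF : F ∈ scrS G v₁) (hne : F ≠ G.edgeFinset)
    {l : ℝ} {r : V → ℝ} (h : IsPerron G δ F l r) : l < 1 := by
  obtain ⟨hFE, ⟨e, heF, hve⟩, hconn⟩ := hF
  obtain ⟨hl, hpos, hoff, hev⟩ := h
  by_contra hl1
  push Not at hl1
  have : Nonempty V := ⟨v₁⟩
  obtain ⟨x, hx⟩ := Finite.exists_max r
  have hm : 0 < r x := (hpos v₁ ⟨e, heF, hve⟩).trans_le (hx v₁)
  have hr0 : ∀ y, 0 ≤ r y := fun y => by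
    by_cases hy : memVerts F y
    · exact (hpos y hy).le
    · exact (hoff y hy).ge
  have key : ∀ z, r z = r x → ∀ y, G.Adj z y → s(z, y) ∈ F ∧ r y = r x := by
    intro z hz y hzy
    have hnn : ∀ y, 0 ≤ phat G δ F z y * r x - MF G δ F z y * r y := by
      intro y
      have hp := phat_nonneg (G := G) hδ F z y
      unfold MF
      split_ifs
      · have := mul_le_mul_of_nonneg_left (hx y) hp
        linarith
      · rw [zero_mul, sub_zero]; exact mul_nonneg hp hm.le
    have hsum : ∑ y, (phat G δ F z y * r x - MF G δ F z y * r y) ≤ 0 := by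
      rw [Finset.sum_sub_distrib, ← Finset.sum_mul, phat_sum hG hV hδ, hev z, hz]
      nlinarith
    have h0 := le_antisymm hsum (Finset.sum_nonneg fun y _ => hnn y)
    rw [Finset.sum_eq_zero_iff_of_nonneg (fun y _ => hnn y)] at h0
    have h1 := h0 y (Finset.mem_univ _)
    have hp := phat_pos hG hV hδ F hzy
    unfold MF at h1
    split_ifs at h1 with hmem
    · refine ⟨hmem, ?_⟩
      have : phat G δ F z y * (r x - r y) = 0 := by linarith
      rcases mul_eq_zero.mp this with h | h
      · exact absurd h hp.ne'
      · linarith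
    · exfalso
      have := mul_pos hp hm
      linarith
  have hall : ∀ y, r y = r x := by
    intro y
    obtain ⟨p⟩ := hG.preconnected x y
    have : ∀ a b, G.Walk a b → r a = r x → r b = r x := by
      intro a b p
      induction p with
      | nil => exact id
      | cons h p ih => exact fun ha => ih (key _ ha _ h).2
    exact this x y p rfl
  apply hne
  apply Finset.Subset.antisymm hFE
  intro e he
  induction e using Sym2.ind with
  | _ a b => exact (key a (hall a) b (by simpa using he)).1

lemma relEntInt_eq (hG : G.Connected) (hV : 3 ≤ Fintype.card V) {δ : ℝ} (hδ : 0 < δ)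
    {F : Finset (Sym2 V)} (hFE : F ⊆ G.edgeFinset) {q : V → V → ℝ} (hq : q ∈ TE F) (ν : V → ℝ) :
    relEntInt ν q (phat G δ F) =
      ((∑ x, ν x * ∑ y, q x y * Real.log (q x y / phat G δ F x y) : ℝ) : EReal) := by
  unfold relEntInt
  have hcoe : ∀ (s : Finset V) (g : V → ℝ), ((∑ x ∈ s, g x : ℝ) : EReal) = ∑ x ∈ s, (g x : EReal) := by
    intro s g
    induction s using Finset.induction_on with
    | empty => simp
    | insert a s ha ih => rw [Finset.sum_insert ha, Finset.sum_insert ha, EReal.coe_add, ih]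
  rw [hcoe]
  refine Finset.sum_congr rfl fun x _ => ?_
  rw [EReal.coe_mul]
  congr 1
  unfold relEnt
  rw [if_pos]
  intro y hy
  by_contra h
  exact (phat_pos hG hV hδ F (adj_of_mem hFE (hq.2.2 x y h))).ne' hy

lemma alphaC_le (hG : G.Connected) (hV : 3 ≤ Fintype.card V) {δ : ℝ} (hδ : 0 < δ)
    {v₁ : V} {S0 : Set (Finset (Sym2 V))} {F : Finset (Sym2 V)} (hF : F ∈ scrS G v₁)
    (hFS : F ∈ S0) {l : ℝ} {r : V → ℝ} (h : IsPerron G δ F l r) :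
    alphaC G δ S0 ≤ ((-Real.log l : ℝ) : EReal) := by
  obtain ⟨hFE, ⟨e, heF, hve⟩, hconn⟩ := hF
  obtain ⟨hl, hpos, hoff, hev⟩ := h
  have hr0 : ∀ y, 0 ≤ r y := fun y => by
    by_cases hy : memVerts F y
    · exact (hpos y hy).le
    · exact (hoff y hy).ge
  let Z : ℝ := ∑ x, Wt G δ F x * r x ^ 2
  have hZ : 0 < Z := by
    refine Finset.sum_pos' (fun x _ => mul_nonneg (Wt_pos hG hV hδ F x).le (sq_nonneg _))
      ⟨v₁, Finset.mem_univ _, ?_⟩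
    have := Wt_pos hG hV hδ F v₁
    have := hpos v₁ ⟨e, heF, hve⟩
    positivity
  let ν : V → ℝ := fun x => Wt G δ F x * r x ^ 2 / Z
  let q : V → V → ℝ := fun x y => MF G δ F x y * r y / (l * r x)
  have hν0 : ∀ x, 0 ≤ ν x := fun x =>
    div_nonneg (mul_nonneg (Wt_pos hG hV hδ F x).le (sq_nonneg _)) hZ.le
  have hν1 : ∑ x, ν x = 1 := by
    simp only [ν]
    rw [← Finset.sum_div]
    exact div_self hZ.ne'
  have hqsum : ∀ x, memVerts F x → ∑ y, q x y = 1 := by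
    intro x hx
    simp only [q]
    rw [← Finset.sum_div, hev x]
    exact div_self (mul_pos hl (hpos x hx)).ne'
  have hqF : ∀ x y, q x y ≠ 0 → s(x, y) ∈ F := by
    intro x y hxy
    by_contra hmem
    apply hxy
    simp [q, MF, hmem]
  have hq : q ∈ TE F := ⟨fun x y => div_nonneg (mul_nonneg (MF_nonneg hδ F x y) (hr0 y))
    (mul_nonneg hl.le (hr0 x)), hqsum, hqF⟩
  have hνF : ∀ x, ν x ≠ 0 → memVerts F x := by
    intro x hx
    by_contra hmem
    apply hx
    simp [ν, hoff x hmem]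
  have hinv : Invariant ν q := by
    intro y
    have h1 : ∀ x, ν x * q x y = r y / (l * Z) * (Wt G δ F y * (MF G δ F y x * r x)) := by
      intro x
      by_cases hx : memVerts F x
      · have h2 := MF_symm hG hV hδ hFE x y
        have h3 := hpos x hx
        rw [← mul_assoc (Wt G δ F y), ← h2]
        simp only [ν, q]
        field_simp
      · simp [ν, hoff x hx]
    simp only [h1]
    rw [← Finset.mul_sum, ← Finset.mul_sum, hev y]
    simp only [ν]
    field_simp
  refine sInf_le ⟨⟨ν, hν0, hν1⟩, F, q, hFS, hq, hνF, hinv, ?_⟩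
  rw [relEntInt_eq hG hV hδ hFE hq]
  congr 1
  have h1 : ∀ x, ν x * ∑ y, q x y * Real.log (q x y / phat G δ F x y) =
      (∑ y, ν x * q x y * Real.log (r y)) - ν x * Real.log (r x) - ν x * Real.log l := by
    intro x
    by_cases hx : memVerts F x
    · have h2 : ∀ y, q x y * Real.log (q x y / phat G δ F x y) =
          q x y * Real.log (r y) - q x y * (Real.log (r x) + Real.log l) := by
        intro y
        by_cases hmem : s(x, y) ∈ F
        · have hp := phat_pos hG hV hδ F (adj_of_mem hFE hmem)
          have hry := hpos y (memVerts_right hmem)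
          have hrx := hpos x hx
          have : q x y / phat G δ F x y = r y / (l * r x) := by
            simp only [q, MF, if_pos hmem]
            field_simp
          rw [this, Real.log_div hry.ne' (mul_pos hl hrx).ne', Real.log_mul hl.ne' hrx.ne']
          ring
        · have : q x y = 0 := by
            by_contra hh
            exact hmem (hqF x y hh)
          simp [this]
      simp only [h2]
      rw [Finset.sum_sub_distrib, ← Finset.sum_mul, hqsum x hx, mul_sub, Finset.mul_sum]
      simp only [mul_assoc]
      ring
    · simp [ν, hoff x hx]
  simp only [h1, Finset.sum_sub_distrib]
  rw [Finset.sum_comm]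
  simp only [← Finset.sum_mul, hν1]
  have h3 : ∀ y, (∑ x, ν x * q x y) = ν y := hinv
  simp only [h3]
  ring

lemma le_term (hG : G.Connected) (hV : 3 ≤ Fintype.card V) {δ : ℝ} (hδ : 0 < δ)
    {v₁ : V} {F : Finset (Sym2 V)} (hF : F ∈ scrS G v₁)
    {l : ℝ} {r : V → ℝ} (h : IsPerron G δ F l r) (ν : ProbMeas V) (q : V → V → ℝ)
    (hq : q ∈ TE F) (hνF : ∀ x, ν.1 x ≠ 0 → memVerts F x) (hinv : Invariant ν.1 q) :
    ((-Real.log l : ℝ) : EReal) ≤ relEntInt ν.1 q (phat G δ F) := by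
  obtain ⟨hFE, -, hconn⟩ := hF
  obtain ⟨hl, hpos, hoff, hev⟩ := h
  obtain ⟨ν, hν0, hν1⟩ := ν
  simp only at hνF hinv ⊢
  rw [relEntInt_eq hG hV hδ hFE hq, EReal.coe_le_coe_iff]
  have h1 : ∀ x, (∑ y, ν x * q x y * Real.log (r y)) - ν x * Real.log (r x) - ν x * Real.log l
      ≤ ν x * ∑ y, q x y * Real.log (q x y / phat G δ F x y) := by
    intro x
    by_cases hx : ν x = 0
    · simp [hx]
    have hxF := hνF x hx
    have hrx := hpos x hxF
    have h2 : ∀ y, q x y - MF G δ F x y * r y / (l * r x) ≤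
        q x y * Real.log (q x y / phat G δ F x y) -
          (q x y * Real.log (r y) - q x y * (Real.log (r x) + Real.log l)) := by
      intro y
      have hqnn := hq.1 x y
      by_cases hmem : s(x, y) ∈ F
      · have hp := phat_pos hG hV hδ F (adj_of_mem hFE hmem)
        have hry := hpos y (memVerts_right hmem)
        simp only [MF, if_pos hmem]
        rcases hqnn.eq_or_lt with h0 | h0
        · rw [← h0]
          simp only [zero_mul, sub_zero, zero_sub]
          have : 0 ≤ phat G δ F x y * r y / (l * r x) := by positivity
          linarith
        · have hlog := Real.log_le_sub_one_of_pos
            (show 0 < (phat G δ F x y * r y / (l * r x)) / q x y by positivity)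
          rw [Real.log_div (by positivity) h0.ne', Real.log_div (by positivity) (by positivity),
            Real.log_mul hp.ne' hry.ne', Real.log_mul hl.ne' hrx.ne'] at hlog
          rw [Real.log_div h0.ne' hp.ne']
          have h5 := mul_le_mul_of_nonneg_left hlog h0.le
          have h6 : q x y * ((phat G δ F x y * r y / (l * r x)) / q x y - 1)
            = phat G δ F x y * r y / (l * r x) - q x y := by field_simp
          rw [h6] at h5
          linarith
      · have : q x y = 0 := by
          by_contra hh
          exact hmem (hq.2.2 x y hh)
        simp [this, MF, hmem]
    have h3 := Finset.sum_le_sum fun y (_ : y ∈ Finset.univ) => h2 y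
    rw [Finset.sum_sub_distrib, Finset.sum_sub_distrib, Finset.sum_sub_distrib, ← Finset.sum_div,
      hev x, ← Finset.sum_mul, hq.2.1 x hxF, div_self (mul_pos hl hrx).ne'] at h3
    have h4 := mul_le_mul_of_nonneg_left h3 (hν0 x)
    have h5 : ∑ y, ν x * q x y * Real.log (r y) = ν x * ∑ y, q x y * Real.log (r y) := by
      rw [Finset.mul_sum]
      exact Finset.sum_congr rfl fun y _ => by ring
    rw [h5]
    linarith
  refine le_trans (le_of_eq ?_) (Finset.sum_le_sum fun x _ => h1 x)
  simp only [Finset.sum_sub_distrib]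
  rw [Finset.sum_comm]
  simp only [← Finset.sum_mul, hν1]
  have h3 : ∀ y, (∑ x, ν x * q x y) = ν y := hinv
  simp only [h3]
  ring

/-- one-step operator of the killed chain -/
def TT (G : SimpleGraph V) [DecidableRel G.Adj] (δ : ℝ) (S0 : Set (Finset (Sym2 V)))
    (φ : Finset (Sym2 V) → V → ℝ) (F : Finset (Sym2 V)) (x : V) : ℝ :=
  ∑ y, phat G δ F x y * (if insert s(x, y) F ∈ S0 then φ (insert s(x, y) F) y else 0)

/-- survival probabilities of the killed chain -/
def uu (G : SimpleGraph V) [DecidableRel G.Adj] (δ : ℝ) (S0 : Set (Finset (Sym2 V))) :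
    ℕ → Finset (Sym2 V) → V → ℝ
  | 0 => fun _ _ => 1
  | n + 1 => TT G δ S0 (uu G δ S0 n)

/-- expectation of a function of the state at time `n` on survival -/
def PP (G : SimpleGraph V) [DecidableRel G.Adj] (δ : ℝ) (v₁ : V) (S0 : Set (Finset (Sym2 V)))
    (n : ℕ) (φ : Finset (Sym2 V) → V → ℝ) : ℝ :=
  ∑ f : Fin (n + 1) → V,
    if ∀ k, 1 ≤ k → k ≤ n → pathEdges ((List.ofFn f).take (k + 1)) ∈ S0 then
      trajProb G δ v₁ n f * φ (pathEdges (List.ofFn f)) (f (Fin.last n))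
    else 0

lemma pathEdges_snoc (L : List V) (x y : V) :
    pathEdges (L ++ [x, y]) = insert s(x, y) (pathEdges (L ++ [x])) := by
  induction L with
  | nil => simp [pathEdges]
  | cons a t ih =>
    cases t with
    | nil =>
      simp only [List.cons_append, List.nil_append, pathEdges]
      rw [Finset.insert_comm]
    | cons b t =>
      simp only [List.cons_append, pathEdges] at ih ⊢
      rw [ih, Finset.insert_comm]

lemma ofFn_split {n : ℕ} (f : Fin (n + 1) → V) :
    List.ofFn f = (List.ofFn fun i => f (Fin.castSucc i)) ++ [f (Fin.last n)] := by
  rw [List.ofFn_succ', List.concat_eq_append]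

lemma ofFn_snoc {n : ℕ} (f : Fin (n + 1) → V) (y : V) :
    List.ofFn (Fin.snoc f y : Fin (n + 1 + 1) → V) = List.ofFn f ++ [y] := by
  rw [ofFn_split]; simp

lemma pathEdges_ofFn_snoc {n : ℕ} (f : Fin (n + 1) → V) (y : V) :
    pathEdges (List.ofFn (Fin.snoc f y : Fin (n + 1 + 1) → V)) =
      insert s(f (Fin.last n), y) (pathEdges (List.ofFn f)) := by
  rw [ofFn_snoc, ofFn_split f, ← pathEdges_snoc]; simp

lemma trajProb_snoc (δ : ℝ) (v₁ : V) {n : ℕ} (f : Fin (n + 1) → V) (y : V) :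
    trajProb G δ v₁ (n + 1) (Fin.snoc f y : Fin (n + 1 + 1) → V) =
      trajProb G δ v₁ n f * phat G δ (pathEdges (List.ofFn f)) (f (Fin.last n)) y := by
  unfold trajProb
  have h0 : (Fin.snoc f y : Fin (n + 1 + 1) → V) 0 = f 0 := by
    simp
  rw [h0]
  split_ifs with h
  · rw [ofFn_snoc, ofFn_split f]
    simp only [List.reverse_append, List.reverse_cons, List.reverse_nil, List.nil_append,
      List.cons_append, stepsProb, List.reverse_reverse]
    ring
  · simp

lemma good_snoc (S0 : Set (Finset (Sym2 V))) {n : ℕ} (f : Fin (n + 1) → V) (y : V) :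
    (∀ k, 1 ≤ k → k ≤ n + 1 →
      pathEdges ((List.ofFn (Fin.snoc f y : Fin (n + 1 + 1) → V)).take (k + 1)) ∈ S0) ↔
    (∀ k, 1 ≤ k → k ≤ n → pathEdges ((List.ofFn f).take (k + 1)) ∈ S0) ∧
      insert s(f (Fin.last n), y) (pathEdges (List.ofFn f)) ∈ S0 := by
  have hlast : (List.ofFn (Fin.snoc f y : Fin (n + 1 + 1) → V)).take (n + 1 + 1) =
      List.ofFn (Fin.snoc f y : Fin (n + 1 + 1) → V) := List.take_of_length_le (by simp)
  have hsm : ∀ k, k ≤ n → (List.ofFn (Fin.snoc f y : Fin (n + 1 + 1) → V)).take (k + 1) =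
      (List.ofFn f).take (k + 1) := by
    intro k hk
    rw [ofFn_snoc, List.take_append_of_le_length (by simp; omega)]
  constructor
  · intro h
    refine ⟨fun k h1 h2 => ?_, ?_⟩
    · rw [← hsm k h2]; exact h k h1 (by omega)
    · have := h (n + 1) (by omega) le_rfl
      rwa [hlast, pathEdges_ofFn_snoc] at this
  · rintro ⟨h1, h2⟩ k hk hk'
    rcases Nat.lt_or_ge n k with h | h
    · obtain rfl : k = n + 1 := by omega
      rwa [hlast, pathEdges_ofFn_snoc]
    · rw [hsm k h]; exact h1 k hk h

lemma PP_succ (δ : ℝ) (v₁ : V) (S0 : Set (Finset (Sym2 V))) (n : ℕ)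
    (φ : Finset (Sym2 V) → V → ℝ) :
    PP G δ v₁ S0 (n + 1) φ = PP G δ v₁ S0 n (TT G δ S0 φ) := by
  unfold PP
  rw [← (Fin.snocEquiv (fun _ : Fin (n + 1 + 1) => V)).sum_comp, Fintype.sum_prod_type_right]
  refine Finset.sum_congr rfl fun f _ => ?_
  simp only [Fin.snocEquiv, Equiv.coe_fn_mk, good_snoc, trajProb_snoc, pathEdges_ofFn_snoc,
    Fin.snoc_last]
  by_cases hg : ∀ k, 1 ≤ k → k ≤ n → pathEdges ((List.ofFn f).take (k + 1)) ∈ S0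
  · rw [if_pos hg]
    unfold TT
    rw [Finset.mul_sum]
    refine Finset.sum_congr rfl fun y _ => ?_
    by_cases h2 : insert s(f (Fin.last n), y) (pathEdges (List.ofFn f)) ∈ S0
    · rw [if_pos ⟨hg, h2⟩, if_pos h2]; ring
    · rw [if_neg (fun h => h2 h.2), if_neg h2]; ring
  · rw [if_neg hg]
    refine Finset.sum_eq_zero fun y _ => ?_
    rw [if_neg (fun h => hg h.1)]

lemma PP_zero (δ : ℝ) (v₁ : V) (S0 : Set (Finset (Sym2 V))) (φ : Finset (Sym2 V) → V → ℝ) :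
    PP G δ v₁ S0 0 φ = φ ∅ v₁ := by
  unfold PP
  rw [Finset.sum_eq_single (fun _ => v₁)]
  · have hc : ∀ k, 1 ≤ k → k ≤ 0 → pathEdges
        ((List.ofFn (fun _ : Fin (0 + 1) => v₁)).take (k + 1)) ∈ S0 :=
      fun k h1 h2 => by omega
    rw [if_pos hc]
    simp [trajProb, stepsProb, pathEdges]
  · intro f _ hf
    have hf0 : f 0 ≠ v₁ := by
      intro h
      apply hf
      funext i
      rw [← h]
      congr 1
      exact Subsingleton.elim (α := Fin 1) i 0
    simp [trajProb, hf0]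
  · simp

lemma probTgt_eq (δ : ℝ) (v₁ : V) (S0 : Set (Finset (Sym2 V))) (n : ℕ) :
    probTgt G δ v₁ S0 n = uu G δ S0 n ∅ v₁ := by
  have h1 : ∀ n m, PP G δ v₁ S0 n (uu G δ S0 m) = uu G δ S0 (n + m) ∅ v₁ := by
    intro n
    induction n with
    | zero => intro m; rw [PP_zero, Nat.zero_add]
    | succ n ih =>
      intro m
      rw [PP_succ, show TT G δ S0 (uu G δ S0 m) = uu G δ S0 (m + 1) from rfl, ih]
      congr 1
      omega
  have h2 := h1 n 0
  rw [Nat.add_zero] at h2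
  rw [← h2]
  simp [probTgt, PP, uu]

lemma TT_mono {δ : ℝ} (hδ : 0 < δ) (S0 : Set (Finset (Sym2 V)))
    {φ ψ : Finset (Sym2 V) → V → ℝ} (h : ∀ F x, φ F x ≤ ψ F x) (F : Finset (Sym2 V)) (x : V) :
    TT G δ S0 φ F x ≤ TT G δ S0 ψ F x := by
  unfold TT
  refine Finset.sum_le_sum fun y _ => mul_le_mul_of_nonneg_left ?_ (phat_nonneg hδ F x y)
  split_ifs
  · exact h _ _
  · exact le_rfl

lemma uu_nonneg {δ : ℝ} (hδ : 0 < δ) (S0 : Set (Finset (Sym2 V))) (n : ℕ)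
    (F : Finset (Sym2 V)) (x : V) : 0 ≤ uu G δ S0 n F x := by
  induction n generalizing F x with
  | zero => simp [uu]
  | succ n ih =>
    refine Finset.sum_nonneg fun y _ => mul_nonneg (phat_nonneg hδ F x y) ?_
    split_ifs
    · exact ih _ _
    · exact le_rfl

lemma uu_succ_le (hG : G.Connected) (hV : 3 ≤ Fintype.card V) {δ : ℝ} (hδ : 0 < δ)
    (S0 : Set (Finset (Sym2 V))) (n : ℕ)
    (F : Finset (Sym2 V)) (x : V) : uu G δ S0 (n + 1) F x ≤ uu G δ S0 n F x := by
  induction n generalizing F x with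
  | zero =>
    simp only [uu]
    refine le_trans ?_ (phat_sum hG hV hδ F x).le
    refine Finset.sum_le_sum fun y _ => ?_
    have := phat_nonneg (G := G) hδ F x y
    split_ifs <;> simp [this]
  | succ n ih => exact TT_mono hδ S0 ih F x

lemma exists_lower {A : Type} [Finite A] (p : A → Prop) (g : A → ℝ) (h : ∀ a, p a → 0 < g a) :
    ∃ m, 0 < m ∧ m ≤ 1 ∧ ∀ a, p a → m ≤ g a := by
  classical
  let g' : Option A → ℝ := fun o => match o with
    | none => 1
    | some a => if p a then g a else 1
  obtain ⟨o, ho⟩ := Finite.exists_min g'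
  refine ⟨g' o, ?_, ho none, fun a ha => ?_⟩
  · cases o with
    | none => exact one_pos
    | some a =>
      simp only [g']
      split_ifs with hp
      · exact h a hp
      · exact one_pos
  · have := ho (some a)
    simp only [g', if_pos ha] at this ⊢
    exact this

lemma exists_upper {A : Type} [Finite A] (g : A → ℝ) : ∃ R, 1 ≤ R ∧ ∀ a, g a ≤ R := by
  obtain ⟨R, hR⟩ := (Set.finite_range g).bddAbove
  exact ⟨max 1 R, le_max_left _ _, fun a => (hR ⟨a, rfl⟩).trans (le_max_right _ _)⟩

lemma ih_bound_aux {a c h R : ℝ} (ih : a ≤ c * h) (hh : h ≤ R) (hc : 0 ≤ c) : a ≤ c * R :=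
  ih.trans (mul_le_mul_of_nonneg_left hh hc)

lemma upper_bound (hG : G.Connected) (hV : 3 ≤ Fintype.card V) {δ : ℝ} (hδ : 0 < δ)
    (v₁ : V) (S0 : Set (Finset (Sym2 V))) (α : ℝ)
    (l : Finset (Sym2 V) → ℝ) (r : Finset (Sym2 V) → V → ℝ)
    (hP : ∀ F ∈ S0, IsPerron G δ F (l F) (r F)) (hl : ∀ F ∈ S0, Real.exp α * l F < 1) :
    ∃ C θ : ℝ, 0 ≤ C ∧ 0 < θ ∧ θ < 1 ∧
      ∀ n : ℕ, Real.exp (α * n) * uu G δ S0 n ∅ v₁ ≤ C * θ ^ n := by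
  obtain ⟨ε, hε, hε1, hεl⟩ := exists_lower (fun F => F ∈ S0) (fun F => 1 - Real.exp α * l F)
    (fun F hF => by have := hl F hF; linarith)
  obtain ⟨m, hm, -, hmr⟩ := exists_lower (A := Finset (Sym2 V) × V)
    (fun a => a.1 ∈ S0 ∧ memVerts a.1 a.2) (fun a => r a.1 a.2)
    (fun a ha => (hP a.1 ha.1).2.1 a.2 ha.2)
  obtain ⟨R, hR1, hR⟩ := exists_upper (A := Finset (Sym2 V) × V) (fun a => r a.1 a.2)
  have hE := Real.exp_pos α
  have hR0 : 0 < R := by linarith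
  let κ : ℝ := min 1 (ε * m / (2 * (Real.exp α * R)))
  have hκ : 0 < κ := lt_min one_pos (by positivity)
  have hκ1 : κ ≤ 1 := min_le_left _ _
  have hκ2 : Real.exp α * (R * κ) ≤ ε / 2 * m := by
    have : κ ≤ ε * m / (2 * (Real.exp α * R)) := min_le_right _ _
    rw [le_div_iff₀ (by positivity)] at this
    linarith
  let h : Finset (Sym2 V) → V → ℝ := fun F x => r F x * κ ^ F.card
  let θ : ℝ := 1 - ε / 2
  have hθ0 : 0 < θ := by simp only [θ]; linarith
  have hθ1 : θ < 1 := by simp only [θ]; linarith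
  have hstep : ∀ F ∈ S0, ∀ x, memVerts F x → Real.exp α * TT G δ S0 h F x ≤ θ * h F x := by
    intro F hF x hx
    have hκF : 0 < κ ^ F.card := pow_pos hκ _
    have h1 : TT G δ S0 h F x ≤ ∑ y, (MF G δ F x y * r F y * κ ^ F.card
        + phat G δ F x y * (R * κ * κ ^ F.card)) := by
      refine Finset.sum_le_sum fun y _ => ?_
      have hp := phat_nonneg (G := G) hδ F x y
      have hpos : 0 ≤ R * κ * κ ^ F.card := by positivity
      by_cases hmem : s(x, y) ∈ F
      · rw [Finset.insert_eq_of_mem hmem, if_pos hF]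
        simp only [MF, if_pos hmem, h]
        have := mul_nonneg hp hpos
        linarith
      · simp only [MF, if_neg hmem, zero_mul, zero_add]
        apply mul_le_mul_of_nonneg_left _ hp
        split_ifs
        · simp only [h]
          rw [Finset.card_insert_of_notMem hmem, pow_succ]
          have := mul_le_mul_of_nonneg_right (hR (insert s(x, y) F, y))
            (mul_pos hκF hκ).le
          simp only at this
          linarith
        · exact hpos
    rw [Finset.sum_add_distrib, ← Finset.sum_mul, ← Finset.sum_mul, phat_sum hG hV hδ,
      (hP F hF).2.2.2 x] at h1
    have h2 := mul_le_mul_of_nonneg_left h1 hE.le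
    refine h2.trans ?_
    have h3 := hεl F hF
    have h4 := hmr (F, x) ⟨hF, hx⟩
    simp only at h3 h4
    have h5 : Real.exp α * (l F * r F x) ≤ (1 - ε) * r F x := by
      rw [← mul_assoc]
      exact mul_le_mul_of_nonneg_right (by linarith) (by linarith)
    have h6 : Real.exp α * (l F * r F x) + Real.exp α * (R * κ) ≤ θ * r F x := by
      simp only [θ]
      nlinarith
    have h7 := mul_le_mul_of_nonneg_right h6 hκF.le
    simp only [h]
    linarith
  obtain ⟨m', hm', -, hmh⟩ := exists_lower (A := Finset (Sym2 V) × V)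
    (fun a => a.1 ∈ S0 ∧ memVerts a.1 a.2) (fun a => h a.1 a.2)
    (fun a ha => mul_pos ((hP a.1 ha.1).2.1 a.2 ha.2) (pow_pos hκ _))
  have hmain : ∀ n : ℕ, ∀ F ∈ S0, ∀ x, memVerts F x →
      Real.exp (α * n) * uu G δ S0 n F x ≤ m'⁻¹ * θ ^ n * h F x := by
    intro n
    induction n with
    | zero =>
      intro F hF x hx
      have h1 := hmh (F, x) ⟨hF, hx⟩
      simp only at h1
      simp only [uu, Nat.cast_zero, mul_zero, Real.exp_zero, pow_zero, mul_one]
      rw [inv_mul_eq_div, le_div_iff₀ hm']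
      linarith
    | succ n ih =>
      intro F hF x hx
      have h1 : Real.exp (α * n) * uu G δ S0 (n + 1) F x ≤ m'⁻¹ * θ ^ n * TT G δ S0 h F x := by
        show Real.exp (α * n) * TT G δ S0 (uu G δ S0 n) F x ≤ _
        unfold TT
        rw [Finset.mul_sum, Finset.mul_sum]
        refine Finset.sum_le_sum fun y _ => ?_
        have hp := phat_nonneg (G := G) hδ F x y
        split_ifs with hi
        · have := mul_le_mul_of_nonneg_left
            (ih _ hi y (memVerts_right (Finset.mem_insert_self _ _))) hp
          linarith
        · simp
      have h2 := hstep F hF x hx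
      have h3 : Real.exp (α * ((n + 1 : ℕ) : ℝ)) = Real.exp α * Real.exp (α * n) := by
        rw [← Real.exp_add]; push_cast; ring_nf
      rw [h3, mul_assoc]
      refine (mul_le_mul_of_nonneg_left h1 hE.le).trans ?_
      have h4 := mul_le_mul_of_nonneg_left h2 (show 0 ≤ m'⁻¹ * θ ^ n by positivity)
      rw [pow_succ]
      linarith
  refine ⟨1 + Real.exp α * m'⁻¹ * R / θ, θ, by positivity, hθ0, hθ1, ?_⟩
  intro n
  cases n with
  | zero =>
    simp only [uu, Nat.cast_zero, mul_zero, Real.exp_zero, pow_zero, mul_one]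
    have : 0 ≤ Real.exp α * m'⁻¹ * R / θ := by positivity
    linarith
  | succ n =>
    have h1 : Real.exp (α * n) * uu G δ S0 (n + 1) ∅ v₁ ≤ m'⁻¹ * θ ^ n * R := by
      show Real.exp (α * n) * TT G δ S0 (uu G δ S0 n) ∅ v₁ ≤ _
      unfold TT
      have : m'⁻¹ * θ ^ n * R = ∑ y, phat G δ ∅ v₁ y * (m'⁻¹ * θ ^ n * R) := by
        rw [← Finset.sum_mul, phat_sum hG hV hδ, one_mul]
      rw [Finset.mul_sum, this]
      refine Finset.sum_le_sum fun y _ => ?_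
      have hp := phat_nonneg (G := G) hδ ∅ v₁ y
      split_ifs with hi
      · have h1 := ih_bound_aux (ih := hmain n _ hi y (memVerts_right (Finset.mem_insert_self _ _)))
          (hh := show h (insert s(v₁, y) ∅) y ≤ R by
            simp only [h]
            have hr := hR (insert s(v₁, y) ∅, y)
            have hr0 := (hP _ hi).2.1 y (memVerts_right (Finset.mem_insert_self _ _))
            have hk : κ ^ (insert s(v₁, y) (∅ : Finset (Sym2 V))).card ≤ 1 := pow_le_one₀ hκ.le hκ1
            simp only at hr
            nlinarith)
          (hc := show 0 ≤ m'⁻¹ * θ ^ n by positivity)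
        have := mul_le_mul_of_nonneg_left h1 hp
        linarith
      · rw [mul_zero, mul_zero]
        positivity
    have h3 : Real.exp (α * ((n + 1 : ℕ) : ℝ)) = Real.exp α * Real.exp (α * n) := by
      rw [← Real.exp_add]; push_cast; ring_nf
    rw [h3, mul_assoc]
    refine (mul_le_mul_of_nonneg_left h1 hE.le).trans ?_
    have h5 : (1 + Real.exp α * m'⁻¹ * R / θ) * θ ^ (n + 1) =
        θ ^ (n + 1) + Real.exp α * (m'⁻¹ * θ ^ n * R) := by
      rw [pow_succ]; field_simp
    rw [h5]
    have : 0 < θ ^ (n + 1) := by positivity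
    linarith

lemma lower_aux {δ : ℝ} (hδ : 0 < δ)
    {S0 : Set (Finset (Sym2 V))} {F : Finset (Sym2 V)} (hFS : F ∈ S0) {l : ℝ} {r : V → ℝ}
    (h : IsPerron G δ F l r) {c : ℝ} (hc0 : 0 < c) (hc : ∀ x, c * r x ≤ 1) (n : ℕ) (x : V) :
    c * l ^ n * r x ≤ uu G δ S0 n F x := by
  induction n generalizing x with
  | zero => simpa [uu] using hc x
  | succ n ih =>
    have h1 : c * l ^ (n + 1) * r x = ∑ y, MF G δ F x y * (c * l ^ n * r y) := by
      have : ∀ y, MF G δ F x y * (c * l ^ n * r y) = c * l ^ n * (MF G δ F x y * r y) :=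
        fun y => by ring
      simp only [this]
      rw [← Finset.mul_sum, h.2.2.2 x]
      ring
    rw [h1]
    refine Finset.sum_le_sum fun y _ => ?_
    have hp := phat_nonneg (G := G) hδ F x y
    by_cases hmem : s(x, y) ∈ F
    · rw [Finset.insert_eq_of_mem hmem, if_pos hFS]
      simp only [MF, if_pos hmem]
      exact mul_le_mul_of_nonneg_left (ih y) hp
    · simp only [MF, if_neg hmem, zero_mul]
      apply mul_nonneg hp
      split_ifs
      · exact uu_nonneg hδ S0 n _ _
      · exact le_rfl

/-- the state `(F, x)` is reached with positive probability before the stopping time -/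
def RS (G : SimpleGraph V) [DecidableRel G.Adj] (δ : ℝ) (v₁ : V) (S0 : Set (Finset (Sym2 V)))
    (F : Finset (Sym2 V)) (x : V) : Prop :=
  ∃ m : ℕ, ∃ c : ℝ, 0 < c ∧ ∀ n, c * uu G δ S0 n F x ≤ uu G δ S0 (n + m) ∅ v₁

lemma RS_step (hG : G.Connected) (hV : 3 ≤ Fintype.card V) {δ : ℝ} (hδ : 0 < δ) {v₁ : V}
    {S0 : Set (Finset (Sym2 V))} {F : Finset (Sym2 V)} {x y : V} (h : RS G δ v₁ S0 F x)
    (hxy : G.Adj x y) (hi : insert s(x, y) F ∈ S0) : RS G δ v₁ S0 (insert s(x, y) F) y := by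
  obtain ⟨m, c, hc, hm⟩ := h
  have hp := phat_pos hG hV hδ F hxy
  refine ⟨m + 1, c * phat G δ F x y, mul_pos hc hp, fun n => ?_⟩
  have h1 := hm (n + 1)
  rw [show n + 1 + m = n + (m + 1) by omega] at h1
  refine le_trans ?_ h1
  rw [mul_assoc]
  apply mul_le_mul_of_nonneg_left _ hc.le
  show _ ≤ TT G δ S0 (uu G δ S0 n) F x
  unfold TT
  have h2 := Finset.single_le_sum (f := fun y => phat G δ F x y *
      (if insert s(x, y) F ∈ S0 then uu G δ S0 n (insert s(x, y) F) y else 0))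
    (fun z _ => mul_nonneg (phat_nonneg hδ F x z) (by
      split_ifs
      · exact uu_nonneg hδ S0 n _ _
      · exact le_rfl)) (Finset.mem_univ y)
  simp only [if_pos hi] at h2
  exact h2

lemma RS_move (hG : G.Connected) (hV : 3 ≤ Fintype.card V) {δ : ℝ} (hδ : 0 < δ) {v₁ : V}
    {S0 : Set (Finset (Sym2 V))} {F : Finset (Sym2 V)} (hFE : F ⊆ G.edgeFinset) (hFS : F ∈ S0)
    {x y : V} (hr : (SimpleGraph.fromEdgeSet (↑F : Set (Sym2 V))).Reachable x y)
    (h : RS G δ v₁ S0 F x) : RS G δ v₁ S0 F y := by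
  obtain ⟨p⟩ := hr
  induction p with
  | nil => exact h
  | cons hadj p ih =>
    rw [SimpleGraph.fromEdgeSet_adj] at hadj
    have hmem := Finset.mem_coe.mp hadj.1
    apply ih
    have := RS_step hG hV hδ h (adj_of_mem hFE hmem) (by rwa [Finset.insert_eq_of_mem hmem])
    rwa [Finset.insert_eq_of_mem hmem] at this

lemma insert_scrS {v₁ : V} {F : Finset (Sym2 V)} (hF : F ∈ scrS G v₁) {a b : V}
    (ha : memVerts F a) (hab : G.Adj a b) : insert s(a, b) F ∈ scrS G v₁ := by
  obtain ⟨hFE, ⟨e, heF, hve⟩, hconn⟩ := hF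
  refine ⟨?_, ⟨e, Finset.mem_insert_of_mem heF, hve⟩, ?_⟩
  · intro e he
    rcases Finset.mem_insert.mp he with rfl | he
    · simpa using hab
    · exact hFE he
  · have hle : SimpleGraph.fromEdgeSet (↑F : Set (Sym2 V)) ≤
        SimpleGraph.fromEdgeSet (↑(insert s(a, b) F) : Set (Sym2 V)) :=
      SimpleGraph.fromEdgeSet_mono (by
        intro e he
        simp only [Finset.coe_insert]
        exact Set.mem_insert_of_mem _ he)
    have key : ∀ z, memVerts (insert s(a, b) F) z →
        (SimpleGraph.fromEdgeSet (↑(insert s(a, b) F) : Set (Sym2 V))).Reachable a z := by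
      rintro z ⟨e, he, hz⟩
      rcases Finset.mem_insert.mp he with rfl | he
      · rcases Sym2.mem_iff.mp hz with rfl | rfl
        · exact SimpleGraph.Reachable.refl _
        · apply SimpleGraph.Adj.reachable
          rw [SimpleGraph.fromEdgeSet_adj]
          exact ⟨by simp, hab.ne⟩
      · exact (hconn a z ha ⟨e, he, hz⟩).mono hle
    exact fun x y hx hy => (key x hx).symm.trans (key y hy)

lemma single_scrS {v₁ : V} {b : V} (hab : G.Adj v₁ b) :
    insert s(v₁, b) (∅ : Finset (Sym2 V)) ∈ scrS G v₁ := by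
  refine ⟨?_, ⟨s(v₁, b), by simp, by simp⟩, ?_⟩
  · intro e he
    have : e = s(v₁, b) := by simpa using he
    subst this
    simpa using hab
  · have key : ∀ z, memVerts (insert s(v₁, b) (∅ : Finset (Sym2 V))) z →
        (SimpleGraph.fromEdgeSet (↑(insert s(v₁, b) (∅ : Finset (Sym2 V))) : Set (Sym2 V))).Reachable v₁ z := by
      rintro z ⟨e, he, hz⟩
      have : e = s(v₁, b) := by simpa using he
      subst this
      rcases Sym2.mem_iff.mp hz with rfl | rfl
      · exact SimpleGraph.Reachable.refl _
      · apply SimpleGraph.Adj.reachable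
        rw [SimpleGraph.fromEdgeSet_adj]
        exact ⟨by simp, hab.ne⟩
    exact fun x y hx hy => (key x hx).symm.trans (key y hy)

lemma boundary_edge {v₁ : V} {F F' : Finset (Sym2 V)} (hF : F ∈ scrS G v₁)
    (hF' : F' ∈ scrS G v₁) (hsub : F' ⊆ F) (hne : F' ≠ F) :
    ∃ a b, memVerts F' a ∧ s(a, b) ∈ F ∧ s(a, b) ∉ F' := by
  obtain ⟨e, heF, heF'⟩ : ∃ e ∈ F, e ∉ F' := by
    by_contra hcon
    push Not at hcon
    exact hne (Finset.Subset.antisymm hsub hcon)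
  obtain ⟨e0, he0, hv⟩ := hF'.2.1
  induction e using Sym2.ind with
  | _ c d =>
    by_cases hc : memVerts F' c
    · exact ⟨c, d, hc, heF, heF'⟩
    · obtain ⟨p⟩ := hF.2.2 v₁ c ⟨e0, hsub he0, hv⟩ (memVerts_left heF)
      obtain ⟨dt, -, h1, h2⟩ := p.exists_boundary_dart {z | memVerts F' z} ⟨e0, he0, hv⟩ hc
      have hadj := dt.adj
      rw [SimpleGraph.fromEdgeSet_adj] at hadj
      refine ⟨dt.fst, dt.snd, h1, Finset.mem_coe.mp hadj.1, fun h => h2 (memVerts_right h)⟩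

lemma RS_reach (hG : G.Connected) (hV : 3 ≤ Fintype.card V) {δ : ℝ} (hδ : 0 < δ) {v₁ : V}
    {S0 : Set (Finset (Sym2 V))} (hS0sub : S0 ⊆ scrS G v₁)
    (hS0dec : DecreasingIn G v₁ S0) {F : Finset (Sym2 V)} (hFS : F ∈ S0) :
    ∃ x, memVerts F x ∧ RS G δ v₁ S0 F x := by
  have hF := hS0sub hFS
  have main : ∀ k : ℕ, k ≤ F.card → ∃ F' x, RS G δ v₁ S0 F' x ∧ F' ⊆ F ∧ k ≤ F'.card ∧
      ((F' = ∅ ∧ x = v₁) ∨ (F' ∈ scrS G v₁ ∧ memVerts F' x)) := by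
    intro k
    induction k with
    | zero =>
      intro _
      exact ⟨∅, v₁, ⟨0, 1, one_pos, fun n => by simp⟩, by simp, by simp, Or.inl ⟨rfl, rfl⟩⟩
    | succ k ih =>
      intro hk
      obtain ⟨F', x, hRS, hsub, hcard, hcase⟩ := ih (by omega)
      by_cases hk' : k + 1 ≤ F'.card
      · exact ⟨F', x, hRS, hsub, hk', hcase⟩
      have hne : F' ≠ F := by rintro rfl; exact hk' hk
      rcases hcase with ⟨rfl, rfl⟩ | ⟨hF', hx⟩
      · obtain ⟨e, heF, hve⟩ := hF.2.1
        obtain ⟨b, rfl⟩ := Sym2.mem_iff_exists.mp hve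
        have hadj := adj_of_mem hF.1 heF
        have hins := single_scrS hadj
        have hsub' : insert s(x, b) ∅ ⊆ F := by simpa using heF
        exact ⟨_, b, RS_step hG hV hδ hRS hadj (hS0dec _ _ hins hF hsub' hFS), hsub',
          by simpa using (by simpa using hcard : k = 0), Or.inr ⟨hins, memVerts_right (Finset.mem_insert_self _ _)⟩⟩
      · have hF'S := hS0dec _ _ hF' hF hsub hFS
        obtain ⟨a, b, ha, hab, hab'⟩ := boundary_edge hF hF' hsub hne
        have hadj := adj_of_mem hF.1 hab
        have hins := insert_scrS hF' ha hadj
        have hsub' : insert s(a, b) F' ⊆ F := Finset.insert_subset hab hsub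
        have hRSa := RS_move hG hV hδ hF'.1 hF'S (hF'.2.2 x a hx ha) hRS
        refine ⟨_, b, RS_step hG hV hδ hRSa hadj (hS0dec _ _ hins hF hsub' hFS), hsub', ?_,
          Or.inr ⟨hins, memVerts_right (Finset.mem_insert_self _ _)⟩⟩
        rw [Finset.card_insert_of_notMem hab']
        omega
  obtain ⟨F', x, hRS, hsub, hcard, hcase⟩ := main F.card le_rfl
  obtain rfl := Finset.eq_of_subset_of_card_le hsub hcard
  rcases hcase with ⟨rfl, -⟩ | ⟨-, hx⟩
  · obtain ⟨e, he, -⟩ := hF.2.1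
    simp at he
  · exact ⟨x, hx, hRS⟩

lemma lower_bound (hG : G.Connected) (hV : 3 ≤ Fintype.card V) {δ : ℝ} (hδ : 0 < δ) {v₁ : V}
    {S0 : Set (Finset (Sym2 V))} (hS0sub : S0 ⊆ scrS G v₁)
    (hS0dec : DecreasingIn G v₁ S0) {F : Finset (Sym2 V)} (hFS : F ∈ S0) {l : ℝ} {r : V → ℝ}
    (h : IsPerron G δ F l r) :
    ∃ c : ℝ, 0 < c ∧ ∃ m : ℕ, ∀ n, c * l ^ n ≤ uu G δ S0 (n + m) ∅ v₁ := by
  obtain ⟨x, hx, m, c, hc, hm⟩ := RS_reach hG hV hδ hS0sub hS0dec hFS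
  obtain ⟨R, hR1, hR⟩ := exists_upper r
  have hR0 : 0 < R := by linarith
  have hrx := h.2.1 x hx
  refine ⟨c * (R⁻¹ * r x), by positivity, m, fun n => ?_⟩
  have h1 := lower_aux hδ hFS h (inv_pos.mpr hR0) (fun y => by
    rw [inv_mul_le_iff₀ hR0, mul_one]; exact hR y) n x
  have h2 := mul_le_mul_of_nonneg_left h1 hc.le
  have h3 := hm n
  linarith

lemma diverge {P : ℕ → ℝ} (hanti : Antitone P) (h0 : ∀ n, 0 ≤ P n) {α : ℝ} (hα : 0 < α)
    {c : ℝ} (hc : 0 < c) {m : ℕ} (hP : ∀ n, m ≤ n → c ≤ Real.exp (α * n) * P n) :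
    (∑' n : ℕ, ENNReal.ofReal (Real.exp (α * (n + 1)) * (P n - P (n + 1)))) +
    (if 0 < α then (⊤ : ℝ≥0∞) else if α = 0 then 1 else 0) *
      ENNReal.ofReal (⨅ n : ℕ, P n) = ⊤ := by
  have hbdd : BddBelow (Set.range P) := ⟨0, by rintro _ ⟨n, rfl⟩; exact h0 n⟩
  have hlim := tendsto_atTop_ciInf hanti hbdd
  rw [if_pos hα]
  rcases (le_ciInf h0 : 0 ≤ ⨅ n, P n).lt_or_eq with hinf | hinf
  · rw [ENNReal.top_mul (ENNReal.ofReal_pos.mpr hinf).ne']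
    simp
  · rw [← hinf] at hlim
    rw [ENNReal.add_eq_top]
    left
    by_contra hne
    let b : ℕ → ℝ := fun n => Real.exp (α * (n + 1)) * (P n - P (n + 1))
    have hb0 : ∀ n, 0 ≤ b n := fun n =>
      mul_nonneg (Real.exp_pos _).le (sub_nonneg.mpr (hanti (Nat.le_succ n)))
    have hsum : Summable b := by
      have := ENNReal.summable_toReal hne
      refine this.congr fun n => ?_
      exact ENNReal.toReal_ofReal (hb0 n)
    obtain ⟨B, hB⟩ := hsum
    have hS := hB.tendsto_sum_nat
    have hblock : ∀ N K : ℕ, Real.exp (α * N) * (P N - P (N + K)) ≤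
        ∑ i ∈ Finset.range (N + K), b i - ∑ i ∈ Finset.range N, b i := by
      intro N K
      induction K with
      | zero => simp
      | succ K ih =>
        rw [← Nat.add_assoc, Finset.sum_range_succ]
        have h1 : Real.exp (α * N) * (P (N + K) - P (N + K + 1)) ≤ b (N + K) := by
          refine mul_le_mul_of_nonneg_right ?_ (sub_nonneg.mpr (hanti (Nat.le_succ _)))
          apply Real.exp_le_exp.mpr
          apply mul_le_mul_of_nonneg_left _ hα.le
          push_cast
          have : (0 : ℝ) ≤ K := Nat.cast_nonneg K
          linarith
        linarith
    have h2 : ∀ N, m ≤ N → c ≤ B - ∑ i ∈ Finset.range N, b i := by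
      intro N hN
      have t1 : Tendsto (fun K => Real.exp (α * N) * (P N - P (N + K))) atTop
          (𝓝 (Real.exp (α * N) * (P N - 0))) := by
        apply Tendsto.const_mul
        apply Tendsto.const_sub
        have := hlim.comp (tendsto_add_atTop_nat N)
        refine this.congr fun K => ?_
        simp [Nat.add_comm]
      have t2 : Tendsto (fun K => ∑ i ∈ Finset.range (N + K), b i - ∑ i ∈ Finset.range N, b i)
          atTop (𝓝 (B - ∑ i ∈ Finset.range N, b i)) := by
        apply Tendsto.sub_const
        have := hS.comp (tendsto_add_atTop_nat N)
        refine this.congr fun K => ?_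
        simp [Nat.add_comm]
      have := le_of_tendsto_of_tendsto' t1 t2 (hblock N)
      rw [sub_zero] at this
      exact (hP N hN).trans this
    have t3 : Tendsto (fun N => B - ∑ i ∈ Finset.range N, b i) atTop (𝓝 (B - B)) :=
      hS.const_sub B
    rw [sub_self] at t3
    have := ge_of_tendsto t3 (eventually_atTop.mpr ⟨m, h2⟩)
    linarith

lemma converge {P : ℕ → ℝ} (h0 : ∀ n, 0 ≤ P n) {α : ℝ}
    {C θ : ℝ} (hC : 0 ≤ C) (hθ0 : 0 < θ) (hθ1 : θ < 1)
    (hP : ∀ n : ℕ, Real.exp (α * n) * P n ≤ C * θ ^ n) :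
    (∑' n : ℕ, ENNReal.ofReal (Real.exp (α * (n + 1)) * (P n - P (n + 1)))) +
    (if 0 < α then (⊤ : ℝ≥0∞) else if α = 0 then 1 else 0) *
      ENNReal.ofReal (⨅ n : ℕ, P n) < ⊤ := by
  have hbdd : BddBelow (Set.range P) := ⟨0, by rintro _ ⟨n, rfl⟩; exact h0 n⟩
  rw [ENNReal.add_lt_top]
  constructor
  · have hs : Summable fun n : ℕ => Real.exp α * C * θ ^ n :=
      (summable_geometric_of_lt_one hθ0.le hθ1).mul_left _
    refine lt_of_le_of_lt (ENNReal.tsum_le_tsum fun n => ?_) hs.tsum_ofReal_lt_top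
    apply ENNReal.ofReal_le_ofReal
    have h1 : Real.exp (α * (n + 1)) = Real.exp α * Real.exp (α * n) := by
      rw [← Real.exp_add]; ring_nf
    have h2 := mul_le_mul_of_nonneg_left (hP n) (Real.exp_pos α).le
    have h3 := mul_nonneg (Real.exp_pos (α * (n + 1))).le (h0 (n + 1))
    rw [mul_sub]
    rw [h1] at h3 ⊢
    linarith
  · split_ifs with hα hα'
    · have hz : (⨅ n, P n) ≤ 0 := by
        have hlim : Tendsto (fun n : ℕ => C * θ ^ n) atTop (𝓝 (C * 0)) :=
          (tendsto_pow_atTop_nhds_zero_of_lt_one hθ0.le hθ1).const_mul C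
        rw [mul_zero] at hlim
        refine ge_of_tendsto' hlim fun n => ?_
        refine (ciInf_le hbdd n).trans (le_trans ?_ (hP n))
        have : 1 ≤ Real.exp (α * n) := Real.one_le_exp (by positivity)
        nlinarith [h0 n]
      rw [ENNReal.ofReal_of_nonpos hz]
      simp
    · simp
    · simp

end Mine2

/-- `α_c(δ)` is the critical exponent for exponential integrability of
the stopping time `T_{𝒮₀}`. -/
theorem orrw_exp_integrability {V : Type} [Fintype V] [DecidableEq V]
    (G : SimpleGraph V) [DecidableRel G.Adj] (hG : G.Connected)
    (hV : 3 ≤ Fintype.card V) (v₁ : V) (δ : ℝ) (hδ : 0 < δ)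
    (S0 : Set (Finset (Sym2 V))) (hS0ne : S0.Nonempty) (hS0sub : S0 ⊆ scrS G v₁)
    (hS0dec : DecreasingIn G v₁ S0) (hS0ne' : S0 ≠ scrS G v₁) :
    ∀ α : ℝ, (((α : ℝ) : EReal) < alphaC G δ S0 → expT G δ v₁ S0 α < ⊤) ∧
      (alphaC G δ S0 ≤ ((α : ℝ) : EReal) → expT G δ v₁ S0 α = ⊤) := by
  have hex : ∀ F, ∃ l r, F ∈ S0 → IsPerron G δ F l r := by
    intro F
    by_cases hF : F ∈ S0
    · obtain ⟨l, r, h⟩ := exists_perron hG hV hδ (hS0sub hF)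
      exact ⟨l, r, fun _ => h⟩
    · exact ⟨0, 0, fun h => absurd h hF⟩
  choose l r hP using hex
  have hne : ∀ F ∈ S0, F ≠ G.edgeFinset := by
    rintro F hF rfl
    apply hS0ne'
    refine Set.Subset.antisymm hS0sub fun F' hF' => ?_
    exact hS0dec _ _ hF' (hS0sub hF) hF'.1 hF
  have hun : ∀ n, 0 ≤ uu G δ S0 n ∅ v₁ := fun n => uu_nonneg hδ S0 n ∅ v₁
  have hua : Antitone fun n => uu G δ S0 n ∅ v₁ :=
    antitone_nat_of_succ_le fun n => uu_succ_le hG hV hδ S0 n ∅ v₁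
  intro α
  have hexp : expT G δ v₁ S0 α =
    (∑' n : ℕ, ENNReal.ofReal (Real.exp (α * (n + 1)) *
      (uu G δ S0 n ∅ v₁ - uu G δ S0 (n + 1) ∅ v₁))) +
    (if 0 < α then (⊤ : ℝ≥0∞) else if α = 0 then 1 else 0) *
      ENNReal.ofReal (⨅ n : ℕ, uu G δ S0 n ∅ v₁) := by
    unfold expT
    simp only [probTgt_eq]
  rw [hexp]
  constructor
  · intro hα
    obtain ⟨C, θ, hC, hθ0, hθ1, hb⟩ := upper_bound hG hV hδ v₁ S0 α l r hP (by
      intro F hF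
      have h1 := hα.trans_le (alphaC_le hG hV hδ (hS0sub hF) hF (hP F hF))
      rw [EReal.coe_lt_coe_iff] at h1
      have h2 : 0 < l F := (hP F hF).1
      rw [← Real.exp_log h2, ← Real.exp_add, Real.exp_lt_one_iff]
      linarith)
    exact converge hun hC hθ0 hθ1 hb
  · intro hα
    obtain ⟨F, hF, hmin⟩ := Set.exists_min_image S0 (fun F => -Real.log (l F))
      (Set.toFinite S0) hS0ne
    have h1 : ((-Real.log (l F) : ℝ) : EReal) ≤ alphaC G δ S0 := by
      refine le_sInf ?_
      rintro c ⟨ν, F', q, hF', hq, hν, hinv, rfl⟩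
      exact le_trans (EReal.coe_le_coe_iff.mpr (hmin F' hF'))
        (le_term hG hV hδ (hS0sub hF') (hP F' hF') ν q hq hν hinv)
    have h2 : -Real.log (l F) ≤ α := EReal.coe_le_coe_iff.mp (h1.trans hα)
    have hl0 : 0 < l F := (hP F hF).1
    have hl1 : l F < 1 := perron_lt_one hG hV hδ (hS0sub hF) (hne F hF) (hP F hF)
    have hα0 : 0 < α := by
      have := Real.log_neg hl0 hl1
      linarith
    obtain ⟨c, hc, m, hm⟩ := lower_bound hG hV hδ hS0sub hS0dec hF (hP F hF)
    refine diverge hua hun hα0 hc (m := m) fun n hn => ?_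
    obtain ⟨k, rfl⟩ := Nat.exists_eq_add_of_le' hn
    have h3 := hm k
    have h4 : Real.exp (-(α * k)) ≤ l F ^ k := by
      rw [← Real.exp_log hl0, ← Real.exp_nat_mul]
      apply Real.exp_le_exp.mpr
      have : (0 : ℝ) ≤ k := Nat.cast_nonneg k
      nlinarith
    have h5 : Real.exp (α * k) ≤ Real.exp (α * ((k + m : ℕ) : ℝ)) := by
      apply Real.exp_le_exp.mpr
      apply mul_le_mul_of_nonneg_left _ hα0.le
      push_cast
      have : (0 : ℝ) ≤ m := Nat.cast_nonneg m
      linarith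
    have h6 : Real.exp (α * k) * Real.exp (-(α * k)) = 1 := by
      rw [← Real.exp_add]; simp
    have h7 := hun (k + m)
    calc c = c * (Real.exp (α * k) * Real.exp (-(α * k))) := by rw [h6, mul_one]
      _ = Real.exp (α * k) * (c * Real.exp (-(α * k))) := by ring
      _ ≤ Real.exp (α * k) * (c * l F ^ k) := by gcongr
      _ ≤ Real.exp (α * k) * uu G δ S0 (k + m) ∅ v₁ := by gcongr
      _ ≤ Real.exp (α * ((k + m : ℕ) : ℝ)) * uu G δ S0 (k + m) ∅ v₁ := by gcongr

end ORRW
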